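/- arXiv:2511.06207 — 2 statements merged into one kernel-verified Lean document; each statement's English description precedes it below -/
import Mathlib

section
/- Let (T_i)_{i=1}^∞ be a sequence of bounded linear operators from a normed linear space X over 𝕂 (𝕂 = ℝ or ℂ) to a normed linear space Y. The following are equivalent: (1) (T_i) is mean Li-Yorke chaotic; (2) there exists a mean Li-Yorke pair; (3) there exists an absolutely mean semi-irregular vector. -/
open Filter Topology

variable {𝕜 X Y : Type*} [RCLike 𝕜] [NormedAddCommGroup X] [NormedSpace 𝕜 X]
  [NormedAddCommGroup Y] [NormedSpace 𝕜 Y]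

/-- The Cesàro average `(1/n) ∑_{i=1}^{n} ‖T i x - T i y‖`. -/
noncomputable def mavg (T : ℕ → X →L[𝕜] Y) (x y : X) (n : ℕ) : ℝ :=
  (∑ i ∈ Finset.Icc 1 n, ‖T i x - T i y‖) / n

/-- The Cesàro average `(1/n) ∑_{i=1}^{n} ‖T i x‖`. -/
noncomputable def avg (T : ℕ → X →L[𝕜] Y) (x : X) (n : ℕ) : ℝ :=
  (∑ i ∈ Finset.Icc 1 n, ‖T i x‖) / n

/-- `limsup_n (1/n) ∑_{i=1}^{n} ‖T i x - T i y‖`, computed in `EReal`. -/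
noncomputable def msup (T : ℕ → X →L[𝕜] Y) (x y : X) : EReal :=
  Filter.limsup (fun n => (mavg T x y n : EReal)) Filter.atTop

/-- `liminf_n (1/n) ∑_{i=1}^{n} ‖T i x - T i y‖`, computed in `EReal`. -/
noncomputable def minf (T : ℕ → X →L[𝕜] Y) (x y : X) : EReal :=
  Filter.liminf (fun n => (mavg T x y n : EReal)) Filter.atTop

/-- `limsup_n (1/n) ∑_{i=1}^{n} ‖T i x‖`, computed in `EReal`. -/
noncomputable def asup (T : ℕ → X →L[𝕜] Y) (x : X) : EReal :=
  Filter.limsup (fun n => (avg T x n : EReal)) Filter.atTop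

/-- `liminf_n (1/n) ∑_{i=1}^{n} ‖T i x‖`, computed in `EReal`. -/
noncomputable def ainf (T : ℕ → X →L[𝕜] Y) (x : X) : EReal :=
  Filter.liminf (fun n => (avg T x n : EReal)) Filter.atTop

/-- `(x, y)` is a mean Li-Yorke pair for `(T i)`. -/
def MeanLiYorkePair (T : ℕ → X →L[𝕜] Y) (x y : X) : Prop :=
  minf T x y = 0 ∧ 0 < msup T x y

/-- `x` is an absolutely mean semi-irregular vector for `(T i)`. -/
def AbsolutelyMeanSemiIrregular (T : ℕ → X →L[𝕜] Y) (x : X) : Prop :=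
  ainf T x = 0 ∧ 0 < asup T x

/-- `(T i)` is mean Li-Yorke chaotic: there is an uncountable set all of whose pairs of
distinct points are mean Li-Yorke pairs. -/
def MeanLiYorkeChaotic (T : ℕ → X →L[𝕜] Y) : Prop :=
  ∃ K : Set X, ¬ K.Countable ∧ ∀ x ∈ K, ∀ y ∈ K, x ≠ y → MeanLiYorkePair T x y

theorem mlyp_iff (T : ℕ → X →L[𝕜] Y) (x y : X) :
    MeanLiYorkePair T x y ↔ AbsolutelyMeanSemiIrregular T (x - y) := by
  simp only [MeanLiYorkePair, AbsolutelyMeanSemiIrregular, minf, msup, ainf, asup, mavg, avg,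
    map_sub]

theorem avg_smul_eq (T : ℕ → X →L[𝕜] Y) (c : 𝕜) (x : X) (n : ℕ) :
    avg T (c • x) n = ‖c‖ * avg T x n := by
  simp only [avg, map_smul, norm_smul, ← Finset.mul_sum, mul_div_assoc]

theorem avg_nonneg_all (T : ℕ → X →L[𝕜] Y) (x : X) (n : ℕ) : 0 ≤ avg T x n := by
  unfold avg; positivity

theorem amsi_iff (T : ℕ → X →L[𝕜] Y) (x : X) :
    AbsolutelyMeanSemiIrregular T x ↔
      (∀ e : ℝ, 0 < e → ∃ᶠ n in atTop, avg T x n < e) ∧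
      (∃ e : ℝ, 0 < e ∧ ∃ᶠ n in atTop, e < avg T x n) := by
  unfold AbsolutelyMeanSemiIrregular ainf asup
  refine and_congr ⟨fun h e he => ?_, fun h => ?_⟩ ⟨fun h => ?_, fun ⟨e, he, h⟩ => ?_⟩
  · have : liminf (fun n => (avg T x n : EReal)) atTop < (e : EReal) := by
      rw [h]; exact_mod_cast he
    exact (frequently_lt_of_liminf_lt (by isBoundedDefault) this).mono
      fun n hn => by exact_mod_cast hn
  · refine le_antisymm ?_ ?_
    · refine le_of_forall_gt_imp_ge_of_dense fun a ha => ?_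
      obtain ⟨e, he, hea⟩ := EReal.lt_iff_exists_real_btwn.1 ha
      refine le_trans (liminf_le_of_frequently_le' ((h e (by exact_mod_cast he)).mono
        fun n hn => ?_)) hea.le
      exact_mod_cast hn.le
    · refine le_liminf_of_le (by isBoundedDefault) (Eventually.of_forall fun n => ?_)
      exact_mod_cast avg_nonneg_all T x n
  · obtain ⟨e, he, hea⟩ := EReal.lt_iff_exists_real_btwn.1 h
    refine ⟨e, by exact_mod_cast he, ?_⟩
    exact (frequently_lt_of_lt_limsup (by isBoundedDefault) hea).mono
      fun n hn => by exact_mod_cast hn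
  · refine lt_of_lt_of_le (b := (e : EReal)) (by exact_mod_cast he) ?_
    exact le_limsup_of_frequently_le' (h.mono fun n hn => by exact_mod_cast hn.le)

theorem amsi_smul (T : ℕ → X →L[𝕜] Y) (x : X) (c : 𝕜) (hc : c ≠ 0)
    (h : AbsolutelyMeanSemiIrregular T x) : AbsolutelyMeanSemiIrregular T (c • x) := by
  rw [amsi_iff] at h ⊢
  have hcpos : 0 < ‖c‖ := norm_pos_iff.2 hc
  obtain ⟨h1, e, he, h2⟩ := h
  refine ⟨fun e he => (h1 (e / ‖c‖) (by positivity)).mono fun n hn => ?_,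
    ‖c‖ * e, by positivity, h2.mono fun n hn => ?_⟩
  · rw [avg_smul_eq, mul_comm]; exact (lt_div_iff₀ hcpos).1 hn
  · rw [avg_smul_eq]; exact mul_lt_mul_of_pos_left hn hcpos

/-- Mean Li-Yorke chaos is equivalent to the existence of a mean Li-Yorke pair,
and to the existence of an absolutely mean semi-irregular vector. -/
theorem meanLiYorkeChaotic_tfae (T : ℕ → X →L[𝕜] Y) :
    List.TFAE [
      MeanLiYorkeChaotic T,
      ∃ x y : X, MeanLiYorkePair T x y,
      ∃ x : X, AbsolutelyMeanSemiIrregular T x] := by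
  tfae_have 1 → 2 := by
    rintro ⟨K, hK, h⟩
    have hnt : K.Nontrivial := by
      by_contra hn
      exact hK (Set.not_nontrivial_iff.1 hn).countable
    obtain ⟨x, hx, y, hy, hxy⟩ := hnt
    exact ⟨x, y, h x hx y hy hxy⟩
  tfae_have 2 → 3 := fun ⟨x, y, h⟩ => ⟨x - y, (mlyp_iff T x y).1 h⟩
  tfae_have 3 → 1 := by
    rintro ⟨x, hx⟩
    have hx0 : x ≠ 0 := by
      rintro rfl
      obtain ⟨-, e, he, h⟩ := (amsi_iff T 0).1 hx
      obtain ⟨n, hn⟩ := h.exists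
      simp only [avg, map_zero, norm_zero, Finset.sum_const_zero, zero_div] at hn
      linarith
    have hinj : Function.Injective (fun r : ℝ => (r : 𝕜) • x) := fun a b hab => by
      have := smul_left_injective 𝕜 hx0 hab
      exact_mod_cast this
    refine ⟨Set.range (fun r : ℝ => (r : 𝕜) • x), fun hc => ?_, ?_⟩
    · have : Countable ℝ := by
        rw [← Set.image_univ] at hc
        exact Set.countable_univ_iff.1 (Set.countable_of_injective_of_countable_image hinj.injOn hc)
      exact not_countable (α := ℝ) this
    · rintro _ ⟨a, rfl⟩ _ ⟨b, rfl⟩ hab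
      rw [mlyp_iff, ← sub_smul]
      refine amsi_smul T x _ (fun h0 => hab ?_) hx
      simp only [sub_eq_zero.1 h0]
  tfae_finish
end

section
/- Let (T_i)_{i=1}^∞ be an almost-commuting, submultiplicative sequence of bounded linear operators on a Banach space X over 𝕂 (𝕂 = ℝ or ℂ). The following are equivalent: (1) (T_i) has a mean Li-Yorke pair; (2) (T_i) has an absolutely mean semi-irregular vector; (3) (T_i) is mean Li-Yorke chaotic; (4) (T_i) has an absolutely mean irregular vector; (5) there exists a closed vector subspace X_0 of X, invariant under every T_i, such that the set of vectors of X_0 that are absolutely mean irregular for (T_i restricted to X_0) is residual in X_0. -/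
open Filter Topology

variable {𝕜 X Y : Type*} [RCLike 𝕜] [NormedAddCommGroup X] [NormedSpace 𝕜 X]
  [NormedAddCommGroup Y] [NormedSpace 𝕜 Y]

/-- `(T i)` is submultiplicative. -/
def Submultiplicative (T : ℕ → X →L[𝕜] X) : Prop :=
  ∃ C : ℝ, 0 < C ∧ ∀ z : X, ∀ i m : ℕ, 1 ≤ i → 1 ≤ m →
    ‖T (i + m) z‖ ≤ C * ‖T i (T m z)‖

/-- `(T i)` is almost-commuting. -/
def AlmostCommuting (T : ℕ → X →L[𝕜] X) : Prop :=
  ∀ x : X, ∀ k : ℕ, 1 ≤ k →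
    Filter.Tendsto (fun i => T i (T k x) - T k (T i x)) Filter.atTop (nhds 0)

theorem avg_nonneg' (T : ℕ → X →L[𝕜] X) (x : X) (n : ℕ) : 0 ≤ avg T x n := by
  unfold avg; positivity

theorem ainf_iff (T : ℕ → X →L[𝕜] X) (x : X) :
    ainf T x = 0 ↔ ∀ ε : ℝ, 0 < ε → ∀ N : ℕ, ∃ n ≥ N, avg T x n < ε := by
  have h0 : 0 ≤ ainf T x := by
    unfold ainf
    refine le_liminf_of_le (by isBoundedDefault) (Eventually.of_forall fun n => ?_)
    exact_mod_cast avg_nonneg' T x n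
  have h1 : ainf T x = 0 ↔ ainf T x ≤ 0 := ⟨fun h => h.le, fun h => le_antisymm h h0⟩
  rw [h1]
  unfold ainf
  rw [liminf_le_iff]
  constructor
  · intro h ε hε N
    have := h (ε : EReal) (by exact_mod_cast hε)
    rw [frequently_atTop] at this
    obtain ⟨n, hn, h2⟩ := this N
    exact ⟨n, hn, by exact_mod_cast h2⟩
  · intro h y hy
    obtain ⟨r, hr0, hr⟩ := EReal.lt_iff_exists_real_btwn.1 hy
    rw [frequently_atTop]
    intro N
    obtain ⟨n, hn, h2⟩ := h r (by exact_mod_cast hr0) N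
    exact ⟨n, hn, lt_trans (by exact_mod_cast h2) hr⟩

theorem asup_top_iff (T : ℕ → X →L[𝕜] X) (x : X) :
    asup T x = ⊤ ↔ ∀ M : ℝ, ∀ N : ℕ, ∃ n ≥ N, M < avg T x n := by
  rw [← top_le_iff]
  unfold asup
  rw [le_limsup_iff]
  constructor
  · intro h M N
    have := h (M : EReal) (EReal.coe_lt_top M)
    rw [frequently_atTop] at this
    obtain ⟨n, hn, h2⟩ := this N
    exact ⟨n, hn, by exact_mod_cast h2⟩
  · intro h y hy
    obtain ⟨r, hr0, hr⟩ := EReal.lt_iff_exists_real_btwn.1 hy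
    rw [frequently_atTop]
    intro N
    obtain ⟨n, hn, h2⟩ := h r N
    exact ⟨n, hn, lt_trans hr0 (by exact_mod_cast h2)⟩

theorem asup_pos_imp (T : ℕ → X →L[𝕜] X) (x : X) (h : 0 < asup T x) :
    ∃ δ : ℝ, 0 < δ ∧ ∀ N : ℕ, ∃ n ≥ N, δ < avg T x n := by
  obtain ⟨r, hr0, hr⟩ := EReal.lt_iff_exists_real_btwn.1 h
  refine ⟨r, by exact_mod_cast hr0, fun N => ?_⟩
  have := frequently_lt_of_lt_limsup (by isBoundedDefault) hr
  rw [frequently_atTop] at this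
  obtain ⟨n, hn, h2⟩ := this N
  exact ⟨n, hn, by exact_mod_cast h2⟩

theorem mavg_eq (T : ℕ → X →L[𝕜] X) (x y : X) : mavg T x y = avg T (x - y) := by
  funext n; simp [mavg, avg, map_sub]

theorem minf_eq (T : ℕ → X →L[𝕜] X) (x y : X) : minf T x y = ainf T (x - y) := by
  unfold minf ainf; rw [mavg_eq]

theorem msup_eq (T : ℕ → X →L[𝕜] X) (x y : X) : msup T x y = asup T (x - y) := by
  unfold msup asup; rw [mavg_eq]

theorem avg_smul' (T : ℕ → X →L[𝕜] X) (c : 𝕜) (x : X) (n : ℕ) :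
    avg T (c • x) n = ‖c‖ * avg T x n := by
  simp [avg, norm_smul, ← Finset.mul_sum, mul_div_assoc]

theorem avg_sub_le' (T : ℕ → X →L[𝕜] X) (x y : X) (n : ℕ) :
    avg T (x - y) n ≤ avg T x n + avg T y n := by
  unfold avg
  rw [← add_div, ← Finset.sum_add_distrib]
  gcongr
  rw [map_sub]
  exact norm_sub_le _ _

theorem avg_continuous' (T : ℕ → X →L[𝕜] X) (n : ℕ) : Continuous fun x => avg T x n := by
  unfold avg
  fun_prop

/-- the elements of the algebra generated by the operators almost commute with them -/
theorem adjoin_comm (T : ℕ → X →L[𝕜] X) (hac : AlmostCommuting T) (S : X →L[𝕜] X)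
    (hS : S ∈ Algebra.adjoin 𝕜 (T '' Set.Ici 1)) :
    ∀ y : X, Tendsto (fun i => T i (S y) - S (T i y)) atTop (𝓝 0) := by
  induction hS using Algebra.adjoin_induction with
  | mem S hS =>
    obtain ⟨k, hk, rfl⟩ := hS
    exact fun y => hac y k hk
  | algebraMap r =>
    intro y
    simp [Algebra.algebraMap_eq_smul_one]
  | add A B _ _ hA hB =>
    intro y
    have := (hA y).add (hB y)
    simp only [add_zero] at this
    refine this.congr fun i => ?_
    simp only [ContinuousLinearMap.add_apply, map_add]
    abel
  | mul A B _ _ hA hB =>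
    intro y
    have h2 := (A.continuous.tendsto 0).comp (hB y)
    rw [map_zero] at h2
    have := (hA (B y)).add h2
    simp only [add_zero] at this
    refine this.congr fun i => ?_
    simp only [ContinuousLinearMap.mul_apply', Function.comp, map_sub]
    abel

theorem ainf_adjoin (T : ℕ → X →L[𝕜] X) (hac : AlmostCommuting T) (S : X →L[𝕜] X)
    (hS : S ∈ Algebra.adjoin 𝕜 (T '' Set.Ici 1)) (x : X)
    (hx : ∀ ε : ℝ, 0 < ε → ∀ N : ℕ, ∃ n ≥ N, avg T x n < ε) :
    ∀ ε : ℝ, 0 < ε → ∀ N : ℕ, ∃ n ≥ N, avg T (S x) n < ε := by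
  intro ε hε N
  have h1 : Tendsto (fun i => ‖T (i + 1) (S x) - S (T (i + 1) x)‖) atTop (𝓝 0) := by
    have := (adjoin_comm T hac S hS x).norm
    rw [norm_zero] at this
    exact (tendsto_add_atTop_iff_nat 1).2 this
  have h2 := h1.cesaro
  obtain ⟨N', hN'⟩ := eventually_atTop.1 (h2.eventually_lt_const (half_pos hε))
  have hp : 0 < ‖S‖ + 1 := by positivity
  obtain ⟨n, hn, hlt⟩ := hx (ε / 2 / (‖S‖ + 1)) (by positivity) (max N N')
  refine ⟨n, le_trans (le_max_left _ _) hn, ?_⟩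
  have h3 := hN' n (le_trans (le_max_right _ _) hn)
  have h4 : avg T (S x) n ≤ ‖S‖ * avg T x n +
      (n : ℝ)⁻¹ * ∑ i ∈ Finset.range n, ‖T (i + 1) (S x) - S (T (i + 1) x)‖ := by
    have e : ∑ i ∈ Finset.range n, ‖T (i + 1) (S x) - S (T (i + 1) x)‖
        = ∑ i ∈ Finset.Icc 1 n, ‖T i (S x) - S (T i x)‖ := by
      rw [Finset.range_eq_Ico,
        Finset.sum_Ico_add' (fun i => ‖T i (S x) - S (T i x)‖) 0 n 1]
      rfl
    rw [e]
    unfold avg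
    rw [← mul_div_assoc, inv_mul_eq_div, ← add_div, Finset.mul_sum, ← Finset.sum_add_distrib]
    gcongr with i hi
    calc ‖T i (S x)‖ = ‖S (T i x) + (T i (S x) - S (T i x))‖ := by congr 1; abel
      _ ≤ ‖S (T i x)‖ + ‖T i (S x) - S (T i x)‖ := norm_add_le _ _
      _ ≤ _ := by gcongr; exact S.le_opNorm _
  have h5 : ‖S‖ * avg T x n ≤ (‖S‖ + 1) * avg T x n := by
    have := avg_nonneg' T x n
    gcongr; linarith
  have h6 : (‖S‖ + 1) * avg T x n < ε / 2 := by
    rw [lt_div_iff₀ hp] at hlt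
    linarith
  linarith

theorem avg_shift (T : ℕ → X →L[𝕜] X) (C : ℝ) (hC : 0 < C)
    (h : ∀ z : X, ∀ i m : ℕ, 1 ≤ i → 1 ≤ m → ‖T (i + m) z‖ ≤ C * ‖T i (T m z)‖)
    (x : X) (j : ℕ) (hj : 1 ≤ j) (n : ℕ) (hn : j < n) :
    avg T x n ≤ (∑ i ∈ Finset.Icc 1 j, ‖T i x‖) / n + C * avg T (T j x) (n - j) := by
  obtain ⟨m, rfl⟩ : ∃ m, n = m + j := ⟨n - j, by omega⟩
  have hm : 0 < m := by omega
  have e : ∑ i ∈ Finset.Icc 1 (m + j), ‖T i x‖ =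
      ∑ i ∈ Finset.Icc 1 j, ‖T i x‖ + ∑ i ∈ Finset.Icc 1 m, ‖T (i + j) x‖ := by
    have a1 : Finset.Icc 1 (m + j) = Finset.Ico 1 (m + j + 1) := rfl
    have a2 : Finset.Icc 1 j = Finset.Ico 1 (j + 1) := rfl
    have a3 : Finset.Icc 1 m = Finset.Ico 1 (m + 1) := rfl
    rw [a1, a2, a3, Finset.sum_Ico_add' (fun i => ‖T i x‖) 1 (m + 1) j,
      ← Finset.sum_Ico_consecutive _ (show 1 ≤ j + 1 by omega) (show j + 1 ≤ m + j + 1 by omega)]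
    congr 2
    congr 1 <;> omega
  have hs : ∑ i ∈ Finset.Icc 1 m, ‖T (i + j) x‖ ≤ C * ∑ i ∈ Finset.Icc 1 m, ‖T i (T j x)‖ := by
    rw [Finset.mul_sum]
    exact Finset.sum_le_sum fun i hi => h x i j (Finset.mem_Icc.1 hi).1 hj
  unfold avg
  rw [e, add_div, Nat.add_sub_cancel, ← mul_div_assoc]
  gcongr
  omega

theorem exists_small (T : ℕ → X →L[𝕜] X) (x : X)
    (hx : ∀ ε : ℝ, 0 < ε → ∀ N : ℕ, ∃ n ≥ N, avg T x n < ε) (ε : ℝ) (hε : 0 < ε) :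
    ∃ j, 1 ≤ j ∧ ‖T j x‖ < ε := by
  obtain ⟨n, hn, h⟩ := hx ε hε 1
  by_contra! hc
  have : (n : ℝ) * ε ≤ ∑ i ∈ Finset.Icc 1 n, ‖T i x‖ := by
    have := Finset.card_nsmul_le_sum (Finset.Icc 1 n) (fun i => ‖T i x‖) ε
      (fun i hi => hc i (Finset.mem_Icc.1 hi).1)
    simpa using this
  unfold avg at h
  have hn' : (0 : ℝ) < n := by exact_mod_cast hn
  rw [div_lt_iff₀ hn'] at h
  linarith

theorem two_imp_five [CompleteSpace X] (T : ℕ → X →L[𝕜] X)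
    (hac : AlmostCommuting T) (hsub : Submultiplicative T) (x : X)
    (hx : ainf T x = 0) (hx' : 0 < asup T x) :
    ∃ X₀ : Submodule 𝕜 X, IsClosed (X₀ : Set X) ∧
        (∀ k : ℕ, 1 ≤ k → ∀ x ∈ X₀, T k x ∈ X₀) ∧
        {x : X₀ | ainf T (x : X) = 0 ∧ asup T (x : X) = ⊤} ∈ residual X₀ := by
  obtain ⟨C, hC, hC'⟩ := hsub
  rw [ainf_iff] at hx
  obtain ⟨δ, hδ, hδ'⟩ := asup_pos_imp T x hx'
  let A := Algebra.adjoin 𝕜 (T '' Set.Ici 1)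
  let M : Submodule 𝕜 X :=
    (Subalgebra.toSubmodule A).map (ContinuousLinearMap.apply 𝕜 X x : (X →L[𝕜] X) →ₗ[𝕜] X)
  have hM : ∀ y, y ∈ M ↔ ∃ S ∈ A, S x = y := by
    intro y
    simp [M, Submodule.mem_map]
  have hinv : ∀ k : ℕ, 1 ≤ k → ∀ y ∈ M.topologicalClosure, T k y ∈ M.topologicalClosure := by
    intro k hk y hy
    refine map_mem_closure (T k).continuous hy ?_
    intro z hz
    obtain ⟨S, hS, rfl⟩ := (hM z).1 hz
    exact (hM _).2 ⟨T k * S, A.mul_mem (Algebra.subset_adjoin ⟨k, hk, rfl⟩) hS, rfl⟩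
  have hxM : x ∈ M.topologicalClosure :=
    M.le_topologicalClosure ((hM x).2 ⟨1, A.one_mem, rfl⟩)
  refine ⟨M.topologicalClosure, M.isClosed_topologicalClosure, hinv, ?_⟩
  set Z := M.topologicalClosure with hZ
  let U : ℕ → Set Z := fun k => {y | ∃ n ≥ k, avg T (y : X) n < 1 / ((k : ℝ) + 1)}
  let V : ℕ → Set Z := fun k => {y | ∃ n ≥ k, (k : ℝ) < avg T (y : X) n}
  have cont : ∀ n, Continuous fun y : Z => avg T (y : X) n := fun n =>
    (avg_continuous' T n).comp continuous_subtype_val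
  have hUo : ∀ k, IsOpen (U k) := by
    intro k
    have : U k = ⋃ n ≥ k, {y : Z | avg T (y : X) n < 1 / ((k : ℝ) + 1)} := by
      ext y; simp [U]
    rw [this]
    exact isOpen_biUnion fun n _ => isOpen_lt (cont n) continuous_const
  have hVo : ∀ k, IsOpen (V k) := by
    intro k
    have : V k = ⋃ n ≥ k, {y : Z | (k : ℝ) < avg T (y : X) n} := by
      ext y; simp [V]
    rw [this]
    exact isOpen_biUnion fun n _ => isOpen_lt continuous_const (cont n)
  have hUd : ∀ k, Dense (U k) := by
    intro k
    rw [Metric.dense_iff]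
    intro y r hr
    obtain ⟨z, hz, hd⟩ := Metric.mem_closure_iff.1 (show (y : X) ∈ closure (M : Set X) from y.2) r hr
    refine ⟨⟨z, M.le_topologicalClosure hz⟩, ?_, ?_⟩
    · rw [Metric.mem_ball, dist_comm]; exact hd
    · obtain ⟨S, hS, rfl⟩ := (hM z).1 hz
      exact ainf_adjoin T hac S hS x hx _ (by positivity) k
  have hVd : ∀ k, Dense (V k) := by
    intro k
    rw [Metric.dense_iff]
    intro y r hr
    by_contra hne
    have hb : ∀ z : Z, dist z y < r → ∀ n ≥ k, avg T (z : X) n ≤ k := by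
      intro z hz n hn
      by_contra! hlt
      exact hne ⟨z, hz, n, hn, hlt⟩
    have hb0 : ∀ z : X, z ∈ Z → ‖z‖ < r → ∀ n ≥ k, avg T z n ≤ 2 * k := by
      intro z hz hzr n hn
      have h1 := hb y (by simpa using hr) n hn
      have h2 := hb (y + ⟨z, hz⟩) (by simpa [dist_eq_norm] using hzr) n hn
      have h3 := avg_sub_le' T ((y : X) + z) y n
      rw [add_sub_cancel_left] at h3
      simp only [Submodule.coe_add] at h2
      linarith
    -- scaling
    let a : ℝ := C * (2 * k) / (δ / 2) + 1
    have ha : 0 < a := by positivity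
    have hak : C * (2 * k) / a ≤ δ / 2 := by
      rw [div_le_iff₀ ha]
      have : δ / 2 * a = C * (2 * k) + δ / 2 := by
        simp only [a]; field_simp
      linarith
    obtain ⟨j, hj, hjs⟩ := exists_small T x hx (r / a) (by positivity)
    have hb1 : ∀ n ≥ k, avg T (T j x) n ≤ 2 * k / a := by
      intro n hn
      have := hb0 ((a : 𝕜) • T j x) (Z.smul_mem _ (hinv j hj x hxM)) (by
        rw [norm_smul, RCLike.norm_ofReal, abs_of_pos ha]
        rw [lt_div_iff₀ ha] at hjs
        linarith) n hn
      rw [avg_smul', RCLike.norm_ofReal, abs_of_pos ha] at this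
      rw [le_div_iff₀ ha]
      linarith
    obtain ⟨N, hN⟩ := eventually_atTop.1
      ((tendsto_const_div_atTop_nhds_zero_nat
        (∑ i ∈ Finset.Icc 1 j, ‖T i x‖)).eventually_lt_const (half_pos hδ))
    obtain ⟨n, hn, hgt⟩ := hδ' (max N (j + k + 1))
    have n1 : N ≤ n := le_trans (le_max_left _ _) hn
    have n2 : j + k + 1 ≤ n := le_trans (le_max_right _ _) hn
    have e1 := hN n n1
    have e2 := avg_shift T C hC hC' x j hj n (by omega)
    have e3 := mul_le_mul_of_nonneg_left (hb1 (n - j) (by omega)) hC.le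
    rw [← mul_div_assoc] at e3
    linarith
  have hres : (⋂ k, (U k ∩ V k)) ∈ residual Z :=
    countable_iInter_mem.2 fun k => inter_mem (residual_of_dense_open (hUo k) (hUd k))
      (residual_of_dense_open (hVo k) (hVd k))
  refine mem_of_superset hres ?_
  intro y hy
  rw [Set.mem_iInter] at hy
  refine ⟨(ainf_iff _ _).2 ?_, (asup_top_iff _ _).2 ?_⟩
  · intro ε hε N
    obtain ⟨k, hk⟩ := exists_nat_one_div_lt hε
    obtain ⟨n, hn, h⟩ := (hy (max k N)).1
    refine ⟨n, le_trans (le_max_right _ _) hn, h.trans (lt_of_le_of_lt ?_ hk)⟩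
    have : (k : ℝ) ≤ (max k N : ℕ) := by exact_mod_cast le_max_left _ _
    gcongr
  · intro B N
    obtain ⟨k, hk⟩ := exists_nat_gt B
    obtain ⟨n, hn, h⟩ := (hy (max k N)).2
    refine ⟨n, le_trans (le_max_right _ _) hn, hk.trans (lt_of_le_of_lt ?_ h)⟩
    exact_mod_cast le_max_left _ _

theorem four_imp_three (T : ℕ → X →L[𝕜] X) (x : X) (hx : ainf T x = 0) (hx' : asup T x = ⊤) :
    ∃ K : Set X, ¬ K.Countable ∧
        ∀ x ∈ K, ∀ y ∈ K, x ≠ y → (minf T x y = 0 ∧ 0 < msup T x y) := by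
  have hx0 : x ≠ 0 := by
    rintro rfl
    obtain ⟨n, -, h⟩ := (asup_top_iff T 0).1 hx' 0 0
    simp [avg] at h
  refine ⟨Set.range fun c : ℝ => (c : 𝕜) • x, ?_, ?_⟩
  · intro hc
    have inj : Function.Injective fun c : ℝ => (c : 𝕜) • x := by
      intro c d h
      exact_mod_cast smul_left_injective 𝕜 hx0 h
    rw [← Set.image_univ] at hc
    exact Cardinal.not_countable_real (Set.countable_of_injective_of_countable_image inj.injOn hc)
  · rintro _ ⟨c, rfl⟩ _ ⟨d, rfl⟩ hne
    have hcd : c - d ≠ 0 := by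
      intro h
      exact hne (by simp [sub_eq_zero.1 h])
    have hp : 0 < |c - d| := abs_pos.2 hcd
    have e : (c : 𝕜) • x - (d : 𝕜) • x = ((c - d : ℝ) : 𝕜) • x := by
      rw [← sub_smul]; push_cast; rfl
    simp only [minf_eq, msup_eq, e]
    rw [ainf_iff] at hx
    rw [asup_top_iff] at hx'
    constructor
    · rw [ainf_iff]
      intro ε hε N
      obtain ⟨n, hn, h⟩ := hx (ε / |c - d|) (by positivity) N
      refine ⟨n, hn, ?_⟩
      rw [avg_smul', RCLike.norm_ofReal]
      rw [lt_div_iff₀ hp] at h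
      linarith
    · have : asup T (((c - d : ℝ) : 𝕜) • x) = ⊤ := by
        rw [asup_top_iff]
        intro M N
        obtain ⟨n, hn, h⟩ := hx' (M / |c - d|) N
        refine ⟨n, hn, ?_⟩
        rw [avg_smul', RCLike.norm_ofReal]
        rw [div_lt_iff₀ hp] at h
        linarith
      rw [this]
      exact EReal.zero_lt_top

/-- **Characterizations of mean Li-Yorke chaos** for an almost-commuting,
submultiplicative sequence of bounded linear operators on a Banach space. -/
theorem meanLiYorkeChaotic_tfae_of_almostCommuting_submultiplicative
    [CompleteSpace X] (T : ℕ → X →L[𝕜] X)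
    (hac : AlmostCommuting T) (hsub : Submultiplicative T) :
    List.TFAE [
      ∃ x y : X, minf T x y = 0 ∧ 0 < msup T x y,
      ∃ x : X, ainf T x = 0 ∧ 0 < asup T x,
      ∃ K : Set X, ¬ K.Countable ∧
        ∀ x ∈ K, ∀ y ∈ K, x ≠ y → (minf T x y = 0 ∧ 0 < msup T x y),
      ∃ x : X, ainf T x = 0 ∧ asup T x = ⊤,
      ∃ X₀ : Submodule 𝕜 X, IsClosed (X₀ : Set X) ∧
        (∀ k : ℕ, 1 ≤ k → ∀ x ∈ X₀, T k x ∈ X₀) ∧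
        {x : X₀ | ainf T (x : X) = 0 ∧ asup T (x : X) = ⊤} ∈ residual X₀] := by
  tfae_have 1 → 2 := by
    rintro ⟨x, y, h1, h2⟩
    exact ⟨x - y, by rwa [← minf_eq], by rwa [← msup_eq]⟩
  tfae_have 2 → 5 := by
    rintro ⟨x, h1, h2⟩
    exact two_imp_five T hac hsub x h1 h2
  tfae_have 5 → 4 := by
    rintro ⟨X₀, hc, -, hr⟩
    haveI : CompleteSpace X₀ := hc.completeSpace_coe
    obtain ⟨x, hx⟩ := (dense_of_mem_residual hr).nonempty
    exact ⟨x, hx⟩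
  tfae_have 4 → 3 := by
    rintro ⟨x, h1, h2⟩
    exact four_imp_three T x h1 h2
  tfae_have 3 → 1 := by
    rintro ⟨K, hK, h⟩
    have : ¬ K.Subsingleton := fun hs => hK hs.countable
    obtain ⟨x, hx, y, hy, hxy⟩ := Set.not_subsingleton_iff.1 this
    exact ⟨x, y, h x hx y hy hxy⟩
  tfae_finish
end
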